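/- Let τ be a first-order language and T a model-complete τ-theory. Suppose given, for each existential τ-formula ψ(x⃗), a universal τ-formula θ_ψ(x⃗) in the same free variables such that T ⊨ ∀x⃗ (ψ(x⃗) ↔ θ_ψ(x⃗)). Then T is axiomatized by T_∀ together with the Π₂ sentences AX_ψ := ∀x⃗ (ψ(x⃗) ↔ θ_ψ(x⃗)) as ψ ranges over the existential τ-formulas: a τ-structure models T if and only if it models T_∀ and all the sentences AX_ψ. -/

import Mathlib

open FirstOrder FirstOrder.Language

universe u v

namespace ModelCompanionship

variable {L : FirstOrder.Language.{u, v}}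

/-- Iterated existential quantification over the last `k` bound variables. -/
def exsN {α : Type*} : ∀ {n k : ℕ}, L.BoundedFormula α (n + k) → L.BoundedFormula α n
  | _, 0, φ => φ
  | _, _ + 1, φ => exsN φ.ex

/-- A sentence is universal (Π₁) if it is the universal closure of a
quantifier-free formula. -/
def IsUniversalSentence (φ : L.Sentence) : Prop :=
  ∃ (n : ℕ) (ψ : L.BoundedFormula Empty n), ψ.IsQF ∧ φ = ψ.alls

/-- A sentence is Π₂ if it is of the form `∀ x⃗ ∃ y⃗ φ` with `φ` quantifier-free. -/
def IsPi2Sentence (φ : L.Sentence) : Prop :=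
  ∃ (m k : ℕ) (ψ : L.BoundedFormula Empty (m + k)), ψ.IsQF ∧ φ = (exsN ψ).alls

/-- A formula is existential if it is the existential closure of a
quantifier-free formula. -/
def IsExistentialFormula {α : Type*} (φ : L.Formula α) : Prop :=
  ∃ (n : ℕ) (ψ : L.BoundedFormula α n), ψ.IsQF ∧ φ = ψ.exs

/-- A formula is universal if it is the universal closure of a
quantifier-free formula. -/
def IsUniversalFormula {α : Type*} (φ : L.Formula α) : Prop :=
  ∃ (n : ℕ) (ψ : L.BoundedFormula α n), ψ.IsQF ∧ φ = ψ.alls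

/-- A bundled nonempty `L`-structure (with domain in universe `max u v`). -/
structure BStruc (L : FirstOrder.Language.{u, v}) where
  carrier : Type (max u v)
  [str : L.Structure carrier]
  [nonempty' : Nonempty carrier]

instance (N : BStruc L) : L.Structure N.carrier := N.str

instance (N : BStruc L) : Nonempty N.carrier := N.nonempty'

/-- `φ` is a semantic consequence of `T`: it holds in every (nonempty) model of `T`. -/
def Consequence (T : L.Theory) (φ : L.Sentence) : Prop :=
  ∀ M : BStruc L, M.carrier ⊨ T → M.carrier ⊨ φ

/-- A formula with free variables is a semantic consequence of `T` if its universal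
closure holds in every (nonempty) model of `T`. -/
def FormulaConsequence {α : Type*} (T : L.Theory) (φ : L.Formula α) : Prop :=
  ∀ M : BStruc L, M.carrier ⊨ T → ∀ v : α → M.carrier, φ.Realize v

/-- `T_∀`: the set of universal sentences which are consequences of `T`. -/
def univConsequences (T : L.Theory) : L.Theory :=
  {φ | IsUniversalSentence φ ∧ Consequence T φ}

/-- A theory is complete if it is satisfiable and decides every sentence. -/
def IsCompleteTheory (T : L.Theory) : Prop :=
  T.IsSatisfiable ∧ ∀ φ : L.Sentence, Consequence T φ ∨ Consequence T φ.not

/-- A theory is Π₁-complete if it is satisfiable and decides every universal sentence. -/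
def Pi1Complete (T : L.Theory) : Prop :=
  T.IsSatisfiable ∧ ∀ φ : L.Sentence, IsUniversalSentence φ →
    (Consequence T φ ∨ Consequence T φ.not)

/-- An embedding is Σ₁-elementary (`M ≺₁ N`) if it reflects existential formulas
with parameters in the domain. -/
def Sigma1Elementary {M : Type*} {N : Type*} [L.Structure M] [L.Structure N]
    (j : M ↪[L] N) : Prop :=
  ∀ (n : ℕ) (φ : L.Formula (Fin n)), IsExistentialFormula φ →
    ∀ a : Fin n → M, φ.Realize (fun i => j (a i)) → φ.Realize a

/-- An embedding is elementary if it preserves and reflects all first-order formulas. -/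
def ElementaryEmb {M : Type*} {N : Type*} [L.Structure M] [L.Structure N]
    (j : M ↪[L] N) : Prop :=
  ∀ (n : ℕ) (φ : L.Formula (Fin n)) (a : Fin n → M),
    φ.Realize (fun i => j (a i)) ↔ φ.Realize a

/-- `M` is `T`-existentially closed: it embeds into a model of `T` and every
embedding of `M` into a model of `T` is Σ₁-elementary. -/
def IsEC (T : L.Theory) (M : Type*) [L.Structure M] : Prop :=
  (∃ N : BStruc L, N.carrier ⊨ T ∧ Nonempty (M ↪[L] N.carrier)) ∧
  ∀ N : BStruc L, N.carrier ⊨ T → ∀ j : M ↪[L] N.carrier, Sigma1Elementary j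

/-- A theory is model complete if every embedding between its models is elementary. -/
def ModelComplete (T : L.Theory) : Prop :=
  ∀ M N : BStruc L, M.carrier ⊨ T → N.carrier ⊨ T →
    ∀ j : M.carrier ↪[L] N.carrier, ElementaryEmb j

/-- `Tstar` is the model companion of `T`. -/
def IsModelCompanion (T Tstar : L.Theory) : Prop :=
  (∀ M : BStruc L, M.carrier ⊨ T →
    ∃ N : BStruc L, N.carrier ⊨ Tstar ∧ Nonempty (M.carrier ↪[L] N.carrier)) ∧
  (∀ M : BStruc L, M.carrier ⊨ Tstar →
    ∃ N : BStruc L, N.carrier ⊨ T ∧ Nonempty (M.carrier ↪[L] N.carrier)) ∧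
  ModelComplete Tstar

/-!
Modulo the axioms `AX_ψ`, negation turns a universal formula into an existential one, hence back
into a universal one. By induction on prenex formulas, every formula is therefore equivalent to a
universal formula modulo the `AX_ψ`. By compactness, a structure `M` satisfying `T_∀` embeds into
some `N ⊨ T`, because a finite part of the diagram of `M` that is inconsistent with `T` would yield
a universal consequence of `T` failing in `M`. If `M` also satisfies the `AX_ψ`, then so does `N`,
and each axiom of `T`, being equivalent to a universal sentence in both structures, passes from `N`
down to `M`.
-/

universe w

section QuantifierFree

variable {α : Type*} {β : Type*} {n : ℕ}

theorem isQF_toFormula {φ : L.BoundedFormula α n} (hφ : φ.IsQF) : φ.toFormula.IsQF := by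
  induction hφ with
  | falsum => exact .falsum
  | of_isAtomic hφ =>
    cases hφ with
    | equal t₁ t₂ => exact (BoundedFormula.IsAtomic.equal _ _).isQF
    | rel R ts => exact (BoundedFormula.IsAtomic.rel _ _).isQF
  | imp _ _ ih₁ ih₂ => exact ih₁.imp ih₂

theorem isQF_restrictFreeVar [DecidableEq α] {φ : L.BoundedFormula α n} (hφ : φ.IsQF)
    (f : φ.freeVarFinset → β) : (φ.restrictFreeVar f).IsQF := by
  induction hφ with
  | falsum => exact .falsum
  | of_isAtomic hφ =>
    cases hφ with
    | equal t₁ t₂ => exact (BoundedFormula.IsAtomic.equal _ _).isQF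
    | rel R ts => exact (BoundedFormula.IsAtomic.rel _ _).isQF
  | imp _ _ ih₁ ih₂ => exact (ih₁ _).imp (ih₂ _)

theorem isQF_iInf [Finite β] {f : β → L.BoundedFormula α n} (hf : ∀ b, (f b).IsQF) :
    (BoundedFormula.iInf f).IsQF := by
  simp only [BoundedFormula.iInf]
  induction Finset.toList _ with
  | nil => exact .top
  | cons b l ih => exact (hf b).inf ih

end QuantifierFree

section UniversalFormulas

variable {α : Type*} {β : Type*} {M : Type*} {N : Type*} [L.Structure M] [L.Structure N]

theorem IsUniversalFormula.realize_of_embedding {χ : L.Formula α} (hχ : IsUniversalFormula χ)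
    (j : M ↪[L] N) {v : α → M} (h : χ.Realize (j ∘ v)) : χ.Realize v := by
  obtain ⟨n, ψ, hψ, rfl⟩ := hχ
  rw [BoundedFormula.realize_alls] at h ⊢
  exact fun xs => (hψ.realize_embedding j).1 (h (j ∘ xs))

theorem realize_alls_relabel {m k : ℕ} {ψ : L.BoundedFormula α k} {f : α → β ⊕ Fin m}
    {v : β → M} :
    (ψ.relabel f).alls.Realize v ↔ ∀ xs : Fin m → M, ψ.alls.Realize (Sum.elim v xs ∘ f) := by
  simp only [BoundedFormula.realize_alls, BoundedFormula.realize_relabel]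
  refine ⟨fun h xs ys => ?_, fun h zs => h _ _⟩
  simpa [Function.comp_def] using h (Fin.append xs ys)

/-- The universal closure of a formula, quantifying over its finitely many free variables: the
counterpart of `FirstOrder.Language.Formula.exClosure`. -/
noncomputable def allClosure (φ : L.Formula α) : L.Sentence :=
  open Classical in
  Formula.iAlls φ.freeVarFinset (Formula.relabel Sum.inr (φ.restrictFreeVar id))

theorem isUniversalSentence_allClosure {φ : L.Formula α} (hφ : φ.IsQF) :
    IsUniversalSentence (allClosure φ) := by
  classical
  exact ⟨_, _, ((isQF_restrictFreeVar hφ _).relabel _).relabel _, rfl⟩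

theorem realize_allClosure [Nonempty M] {φ : L.Formula α} :
    M ⊨ allClosure φ ↔ ∀ v : α → M, φ.Realize v := by
  classical
  simp only [allClosure, Sentence.Realize, Formula.realize_iAlls, Formula.realize_relabel]
  refine ⟨fun h v => ?_, fun h xs => ?_⟩
  · exact (BoundedFormula.realize_restrictFreeVar (f := id) v fun _ => rfl).1 (h fun a => v a)
  · let v : α → M := Function.extend Subtype.val xs fun _ => Classical.arbitrary M
    have hv (a : φ.freeVarFinset) : xs a = v a := (Subtype.val_injective.extend_apply _ _ a).symm
    exact (BoundedFormula.realize_restrictFreeVar v hv).2 (h v)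

end UniversalFormulas

section Consequences

variable {T : L.Theory}

theorem Consequence.models {φ : L.Sentence} (h : Consequence T φ) : T ⊨ᵇ φ :=
  Theory.models_sentence_iff.2 fun K => h ⟨K⟩ K.is_model

theorem FormulaConsequence.models {α : Type} {φ : L.Formula α} (h : FormulaConsequence T φ) :
    T ⊨ᵇ φ :=
  Theory.models_formula_iff.2 fun K => h ⟨K⟩ K.is_model

theorem models_univConsequences {M : Type*} [L.Structure M] [Nonempty M] [M ⊨ T] :
    M ⊨ univConsequences T :=
  (Theory.model_iff _).2 fun _ hφ => hφ.2.models.realize_sentence M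

end Consequences

section Embeddings

variable {T : L.Theory} {M : Type w} [L.Structure M]

theorem exists_model_realize_of_finset {α : Type w} {Γ : Set (L.Formula α)}
    (h : ∀ s : Finset (L.Formula α), ↑s ⊆ Γ →
      ∃ (K : T.ModelType) (c : α → K), ∀ δ ∈ s, δ.Realize c) :
    ∃ (N : Theory.ModelType.{u, v, max u v w} T) (c : α → N), ∀ δ ∈ Γ, δ.Realize c := by
  classical
  let T' := (L.lhomWithConstants α).onTheory T
  have hsat : (T' ∪ Formula.equivSentence '' Γ).IsSatisfiable := by
    refine Theory.isSatisfiable_iff_isFinitelySatisfiable.2 fun T₀ hT₀ => ?_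
    obtain ⟨K, c, hc⟩ := h {δ ∈ T₀.image Formula.equivSentence.symm | δ ∈ Γ}
      (by simp [Set.subset_def])
    let := constantsOn.structure c
    have hKT' : K ⊨ T' := (LHom.onTheory_model _ T).2 K.is_model
    have hKT₀ : K ⊨ (T₀ : (L[[α]]).Theory) := by
      refine (Theory.model_iff _).2 fun σ hσ => ?_
      rcases hT₀ hσ with hσT' | ⟨δ, hδ, rfl⟩
      · exact hKT'.realize_of_mem σ hσT'
      · exact (Formula.realize_equivSentence K δ).2
          (hc δ (by simpa [hδ, Equiv.symm_apply_eq] using hσ))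
    exact Theory.Model.isSatisfiable K
  obtain ⟨N⟩ := hsat
  let : L.Structure N := (L.lhomWithConstants α).reduct N
  have hN : N ⊨ T := (LHom.onTheory_model (L.lhomWithConstants α) T).1
    (N.is_model.mono Set.subset_union_left)
  refine ⟨⟨N⟩, fun a => (L.con a : N), fun δ hδ => ?_⟩
  exact (Formula.realize_equivSentence N δ).1
    (N.is_model.realize_of_mem _ (Or.inr ⟨δ, hδ, rfl⟩))

theorem exists_embedding_of_realize_isQF {N : Type*} [L.Structure N] {c : M → N}
    (hc : ∀ δ : L.Formula M, δ.IsQF → δ.Realize id → δ.Realize c) :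
    ∃ j : M ↪[L] N, ⇑j = c := by
  have realize_iff (δ : L.Formula M) (hδ : δ.IsQF) : δ.Realize c ↔ δ.Realize id :=
    ⟨fun h => by_contra fun hid => Formula.realize_not.1 (hc δ.not hδ.not hid) h, hc δ hδ⟩
  have equal_iff (t₁ t₂ : L.Term M) :
      t₁.realize c = t₂.realize c ↔ t₁.realize id = t₂.realize id := by
    simpa only [Formula.realize_equal] using
      realize_iff (t₁.equal t₂) (BoundedFormula.IsAtomic.equal _ _).isQF
  refine ⟨⟨⟨c, fun a b hab => ?_⟩, fun F x => ?_, fun R x => ?_⟩, rfl⟩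
  · exact (equal_iff (Term.var a) (Term.var b)).1 hab
  · exact ((equal_iff (Term.func F fun i => Term.var (x i)) (Term.var (Structure.funMap F x))).2
      rfl).symm
  · exact Formula.realize_rel.symm.trans
      ((realize_iff (R.formula fun i => Term.var (x i))
        (BoundedFormula.IsAtomic.rel _ _).isQF).trans Formula.realize_rel)

theorem exists_model_realize_of_isQF [Nonempty M] (hM : M ⊨ univConsequences T) {β : Type*}
    {δ : L.Formula β} (hδ : δ.IsQF) {v : β → M} (hv : δ.Realize v) :
    ∃ (K : Theory.ModelType.{u, v, max u v} T) (c : β → K), δ.Realize c := by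
  by_contra! hcon
  have hmem : allClosure δ.not ∈ univConsequences T := by
    refine ⟨isUniversalSentence_allClosure hδ.not, fun K hK => realize_allClosure.2 fun c => ?_⟩
    exact Formula.realize_not.2 (hcon ⟨K.carrier⟩ c)
  exact Formula.realize_not.1 (realize_allClosure.1 (hM.realize_of_mem _ hmem) v) hv

theorem exists_embedding_of_models_univConsequences [Nonempty M] (hM : M ⊨ univConsequences T) :
    ∃ N : Theory.ModelType.{u, v, max u v w} T, Nonempty (M ↪[L] N) := by
  obtain ⟨N, c, hc⟩ : ∃ (N : Theory.ModelType.{u, v, max u v w} T) (c : M → N),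
      ∀ δ ∈ {δ : L.Formula M | δ.IsQF ∧ δ.Realize id}, δ.Realize c := by
    refine exists_model_realize_of_finset fun s hs => ?_
    obtain ⟨K, c, hc⟩ := exists_model_realize_of_isQF hM
      (δ := Formula.iInf fun δ : s => (δ : L.Formula M)) (v := id)
      (isQF_iInf fun δ => (hs δ.2).1) (Formula.realize_iInf.2 fun δ => (hs δ.2).2)
    exact ⟨K, c, fun δ hδ => Formula.realize_iInf.1 hc ⟨δ, hδ⟩⟩
  obtain ⟨j, -⟩ := exists_embedding_of_realize_isQF fun δ hδ hid => hc δ ⟨hδ, hid⟩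
  exact ⟨N, ⟨j⟩⟩

end Embeddings

section UniversalEquivalents

variable {T : L.Theory} {n : ℕ}

/-- `φ` is equivalent to a universal formula modulo `T`. The universal formula has `Fin n` as its
type of free variables, as in the axioms `AX_ψ`; they correspond to the `n` dangling bound variables
of `φ`, which is the form in which formulas are built up by induction. -/
def HasUniversalEquiv (T : L.Theory) (φ : L.BoundedFormula Empty n) : Prop :=
  ∃ χ : L.Formula (Fin n), IsUniversalFormula χ ∧ φ ⇔[T] BoundedFormula.relabel Sum.inr χ

theorem hasUniversalEquiv_of_isQF {φ : L.BoundedFormula Empty n} (hφ : φ.IsQF) :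
    HasUniversalEquiv T φ := by
  refine ⟨φ.toFormula.relabel (Sum.elim Empty.elim id),
    ⟨0, _, (isQF_toFormula hφ).relabel _, rfl⟩, fun K v xs => ?_⟩
  rw [BoundedFormula.realize_iff, Formula.realize_relabel_sumInr, Formula.realize_relabel,
    BoundedFormula.realize_toFormula, Subsingleton.elim v]
  rfl

theorem HasUniversalEquiv.all {φ : L.BoundedFormula Empty (n + 1)} (h : HasUniversalEquiv T φ) :
    HasUniversalEquiv T φ.all := by
  obtain ⟨_, ⟨k, ψ, hψ, rfl⟩, hφψ⟩ := h
  let f : Fin (n + 1) → Fin n ⊕ Fin 1 := Fin.snoc (α := fun _ => Fin n ⊕ Fin 1) Sum.inl (Sum.inr 0)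
  refine ⟨(ψ.relabel f).alls, ⟨_, _, hψ.relabel f, rfl⟩, hφψ.all.trans fun K v xs => ?_⟩
  have elim_comp (ys : Fin 1 → K) : Sum.elim xs ys ∘ f = Fin.snoc xs (ys 0) := by
    funext i
    refine Fin.lastCases ?_ (fun i => ?_) i <;> simp [f]
  simp only [BoundedFormula.realize_iff, BoundedFormula.realize_all,
    Formula.realize_relabel_sumInr, realize_alls_relabel, elim_comp]
  exact (Equiv.funUnique (Fin 1) K).forall_congr_right.symm

theorem HasUniversalEquiv.not
    (hT : ∀ ψ : L.Formula (Fin n), IsExistentialFormula ψ → ∃ χ, IsUniversalFormula χ ∧ ψ ⇔[T] χ)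
    {φ : L.BoundedFormula Empty n} (h : HasUniversalEquiv T φ) : HasUniversalEquiv T φ.not := by
  obtain ⟨_, ⟨k, ψ, hψ, rfl⟩, hφψ⟩ := h
  obtain ⟨χ, hχ, hψχ⟩ := hT ψ.not.exs ⟨k, ψ.not, hψ.not, rfl⟩
  refine ⟨χ, hχ, hφψ.not.trans fun K v xs => ?_⟩
  rw [BoundedFormula.realize_iff, BoundedFormula.realize_not, Formula.realize_relabel_sumInr,
    Formula.realize_relabel_sumInr, ← hψχ.realize_iff, BoundedFormula.realize_alls,
    BoundedFormula.realize_exs]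
  simp only [BoundedFormula.realize_not, not_forall]

theorem hasUniversalEquiv_of_existential
    (hT : ∀ (m : ℕ) (ψ : L.Formula (Fin m)), IsExistentialFormula ψ →
      ∃ χ, IsUniversalFormula χ ∧ ψ ⇔[T] χ)
    (φ : L.BoundedFormula Empty n) : HasUniversalEquiv T φ := by
  obtain ⟨χ, hχ, hφχ⟩ : HasUniversalEquiv T φ.toPrenex :=
    φ.toPrenex_isPrenex.induction_on_all_not (P := HasUniversalEquiv T)
      hasUniversalEquiv_of_isQF HasUniversalEquiv.all (HasUniversalEquiv.not (hT _))
  have hprenex : φ ⇔[T] φ.toPrenex := fun K v xs => by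
    rw [BoundedFormula.realize_iff, BoundedFormula.realize_toPrenex]
  exact ⟨χ, hχ, hprenex.trans hφχ⟩

theorem HasUniversalEquiv.realize_of_embedding {φ : L.Sentence} (h : HasUniversalEquiv T φ)
    {M N : Type*} [L.Structure M] [L.Structure N] [Nonempty M] [Nonempty N]
    (hM : M ⊨ T) (hN : N ⊨ T) (j : M ↪[L] N) (hφ : N ⊨ φ) : M ⊨ φ := by
  obtain ⟨χ, hχ, hφχ⟩ := h
  have hNχ : χ.Realize (j ∘ default) :=
    (Formula.realize_relabel_sumInr χ).1 (hφχ.realize_bd_iff.1 (by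
      rwa [Subsingleton.elim (j ∘ default) default]))
  exact hφχ.realize_bd_iff.2 ((Formula.realize_relabel_sumInr χ).2 (hχ.realize_of_embedding j hNχ))

end UniversalEquivalents

section Axioms

variable {T : L.Theory} {θ : ∀ n : ℕ, L.Formula (Fin n) → L.Formula (Fin n)}

/-- The theory consisting of the sentences `AX_ψ := ∀ x⃗ (ψ(x⃗) ↔ θ_ψ(x⃗))` for `ψ` existential. -/
def existentialAxioms (θ : ∀ n : ℕ, L.Formula (Fin n) → L.Formula (Fin n)) : L.Theory :=
  {σ | ∃ (n : ℕ) (ψ : L.Formula (Fin n)),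
    IsExistentialFormula ψ ∧ σ = allClosure (ψ.iff (θ n ψ))}

theorem models_existentialAxioms_iff {M : Type*} [L.Structure M] [Nonempty M] :
    M ⊨ existentialAxioms θ ↔ ∀ (n : ℕ) (ψ : L.Formula (Fin n)), IsExistentialFormula ψ →
      ∀ a : Fin n → M, (ψ.iff (θ n ψ)).Realize a := by
  refine (Theory.model_iff _).trans ⟨fun h n ψ hψ => ?_, ?_⟩
  · exact realize_allClosure.1 (h _ ⟨n, ψ, hψ, rfl⟩)
  · rintro h _ ⟨n, ψ, hψ, rfl⟩
    exact realize_allClosure.2 (h n ψ hψ)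

theorem iff_of_existentialAxioms {n : ℕ} {ψ : L.Formula (Fin n)} (hψ : IsExistentialFormula ψ) :
    ψ ⇔[existentialAxioms θ] θ n ψ :=
  Theory.models_formula_iff.2 fun K => models_existentialAxioms_iff.1 K.is_model n ψ hψ

theorem models_existentialAxioms
    (hθ : ∀ (n : ℕ) (ψ : L.Formula (Fin n)), IsExistentialFormula ψ →
      FormulaConsequence T (ψ.iff (θ n ψ)))
    {M : Type*} [L.Structure M] [Nonempty M] [M ⊨ T] : M ⊨ existentialAxioms θ :=
  models_existentialAxioms_iff.2 fun n ψ hψ _ => (hθ n ψ hψ).models.realize_formula M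

end Axioms

theorem modelComplete_axiomatization_general {T : L.Theory}
    {θ : ∀ n : ℕ, L.Formula (Fin n) → L.Formula (Fin n)}
    (hθ : ∀ (n : ℕ) (ψ : L.Formula (Fin n)), IsExistentialFormula ψ →
      IsUniversalFormula (θ n ψ) ∧ FormulaConsequence T (ψ.iff (θ n ψ)))
    (M : Type w) [L.Structure M] [Nonempty M] :
    M ⊨ T ↔
      (M ⊨ univConsequences T ∧
        ∀ (n : ℕ) (ψ : L.Formula (Fin n)), IsExistentialFormula ψ →
          ∀ a : Fin n → M, (ψ.iff (θ n ψ)).Realize a) := by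
  have hTθ : ∀ (n : ℕ) (ψ : L.Formula (Fin n)), IsExistentialFormula ψ →
      FormulaConsequence T (ψ.iff (θ n ψ)) := fun n ψ hψ => (hθ n ψ hψ).2
  rw [← models_existentialAxioms_iff]
  refine ⟨fun _ => ⟨models_univConsequences, models_existentialAxioms hTθ⟩, fun ⟨hM, hMθ⟩ => ?_⟩
  obtain ⟨N, ⟨j⟩⟩ := exists_embedding_of_models_univConsequences hM
  refine (Theory.model_iff _).2 fun φ hφ => ?_
  have hφ_univ : HasUniversalEquiv (existentialAxioms θ) φ :=
    hasUniversalEquiv_of_existential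
      (fun n ψ hψ => ⟨θ n ψ, (hθ n ψ hψ).1, iff_of_existentialAxioms hψ⟩) φ
  exact hφ_univ.realize_of_embedding hMθ (models_existentialAxioms hTθ) j
    (N.is_model.realize_of_mem φ hφ)

/-- A model-complete theory `T` is axiomatized by `T_∀` together with the Π₂ sentences
`AX_ψ := ∀ x⃗ (ψ(x⃗) ↔ θ_ψ(x⃗))` for `ψ` existential and `θ_ψ` a `T`-equivalent universal
formula. -/
theorem modelComplete_axiomatization (T : L.Theory) (hT : ModelComplete T)
    (θ : ∀ n : ℕ, L.Formula (Fin n) → L.Formula (Fin n))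
    (hθ : ∀ (n : ℕ) (ψ : L.Formula (Fin n)), IsExistentialFormula ψ →
      IsUniversalFormula (θ n ψ) ∧ FormulaConsequence T (ψ.iff (θ n ψ))) :
    ∀ M : BStruc L,
      (M.carrier ⊨ T ↔
        (M.carrier ⊨ univConsequences T ∧
          ∀ (n : ℕ) (ψ : L.Formula (Fin n)), IsExistentialFormula ψ →
            ∀ a : Fin n → M.carrier, (ψ.iff (θ n ψ)).Realize a)) := by
  exact fun M => modelComplete_axiomatization_general hθ M.carrier

end ModelCompanionship
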